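/- For an arbitrary prime power q and any divisor t of q−1, every vertex of the graph G(q,t) has at least q−1 neighbors; more precisely, the number of vertices adjacent to any given vertex is either q or q−1. -/

import Mathlib

/-- The scaling relation by the subgroup `H ≤ Fˣ` on nonzero pairs of field elements:
`(a₁,b₁) ∼ (a₂,b₂)` iff there is `h ∈ H` with `a₁ = h·a₂` and `b₁ = h·b₂`. -/
def Grel {F : Type} [Field F] (H : Subgroup Fˣ) (p p' : {p : F × F // p ≠ 0}) : Prop :=
  ∃ h ∈ H, p.1.1 = (h : F) * p'.1.1 ∧ p.1.2 = (h : F) * p'.1.2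

/-- The vertex set of the graph `G(q,t)`: nonzero pairs modulo scaling by `H`. -/
def GVertex (F : Type) [Field F] (H : Subgroup Fˣ) : Type :=
  Quot (Grel H)

/-- Membership of a field element in the subgroup `H ≤ Fˣ`. -/
def memH {F : Type} [Field F] (H : Subgroup Fˣ) (x : F) : Prop :=
  ∃ h ∈ H, (h : F) = x

/-- Adjacency in the graph `G(q,t)`: `⟨a,b⟩` and `⟨x,y⟩` are adjacent iff `a·x + b·y ∈ H`
(this condition is independent of the chosen representatives). -/
def GAdj {F : Type} [Field F] (H : Subgroup Fˣ) (u v : GVertex F H) : Prop :=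
  ∃ p p' : {p : F × F // p ≠ 0},
    u = Quot.mk (Grel H) p ∧ v = Quot.mk (Grel H) p' ∧
      memH H (p.1.1 * p'.1.1 + p.1.2 * p'.1.2)

theorem Grel_equiv {F : Type} [Field F] (H : Subgroup Fˣ) : Equivalence (Grel H) := by
  refine ⟨fun p => ⟨1, H.one_mem, by simp, by simp⟩, ?_, ?_⟩
  · rintro p p' ⟨h, hh, h1, h2⟩
    refine ⟨h⁻¹, H.inv_mem hh, ?_, ?_⟩
    · rw [h1]; simp
    · rw [h2]; simp
  · rintro p p' p'' ⟨h, hh, h1, h2⟩ ⟨k, hk, k1, k2⟩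
    refine ⟨h * k, H.mul_mem hh hk, ?_, ?_⟩
    · rw [h1, k1]; push_cast; ring
    · rw [h2, k2]; push_cast; ring

theorem Grel_exact {F : Type} [Field F] (H : Subgroup Fˣ) {p p' : {p : F × F // p ≠ 0}}
    (h : Quot.mk (Grel H) p = Quot.mk (Grel H) p') : Grel H p p' :=
  (Grel_equiv H).eqvGen_iff.1 (Quot.eqvGen_exact h)

theorem GVertex_card {F : Type} [Field F] [Fintype F]
    (H : Subgroup Fˣ) (v : GVertex F H) :
    {w : GVertex F H | GAdj H v w}.ncard = Fintype.card F := by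
  obtain ⟨⟨⟨a, b⟩, hab⟩, rfl⟩ := Quot.exists_rep v
  have hab' : a ≠ 0 ∨ b ≠ 0 := by
    by_contra hc
    push Not at hc
    exact hab (by rw [hc.1, hc.2]; rfl)
  obtain ⟨x0, y0, h0⟩ : ∃ x0 y0 : F, a * x0 + b * y0 = 1 := by
    rcases hab' with h | h
    · exact ⟨a⁻¹, 0, by simp [h]⟩
    · exact ⟨0, b⁻¹, by simp [h]⟩
  have hs : ∀ s : F, a * (x0 - b * s) + b * (y0 + a * s) = 1 := fun s => by
    rw [← h0]; ring
  have hn : ∀ s : F, ((x0 - b * s, y0 + a * s) : F × F) ≠ 0 := fun s hc => by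
    have h1 := congrArg Prod.fst hc
    have h2 := congrArg Prod.snd hc
    simp only [Prod.fst_zero, Prod.snd_zero] at h1 h2
    have := hs s
    rw [h1, h2] at this
    simp at this
  let f : F → GVertex F H := fun s => Quot.mk (Grel H) ⟨(x0 - b * s, y0 + a * s), hn s⟩
  have hf : Function.Injective f := by
    intro s s' he
    obtain ⟨h, hh, h1, h2⟩ := Grel_exact H he
    simp only at h1 h2
    have e : (h : F) = 1 := by
      have e1 := hs s
      rw [h1, h2] at e1
      linear_combination e1 - (h : F) * hs s'
    rw [e] at h1 h2
    rcases hab' with ha | hb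
    · exact mul_left_cancel₀ ha (by linear_combination h2)
    · exact mul_left_cancel₀ hb (by linear_combination -h1)
  have himg : {w : GVertex F H | GAdj H (Quot.mk (Grel H) ⟨(a, b), hab⟩) w} = f '' Set.univ := by
    ext w
    simp only [Set.mem_setOf_eq, Set.image_univ, Set.mem_range]
    constructor
    · rintro ⟨p, ⟨⟨x, y⟩, hxy⟩, hp, rfl, k, hk, hkk⟩
      obtain ⟨h, hh, h1, h2⟩ := Grel_exact H hp
      simp only at h1 h2 hkk
      -- the representative `h⁻¹ * k⁻¹ • (x, y)` lies on the line
      have key : a * (((h⁻¹ * k⁻¹ : Fˣ) : F) * x) + b * (((h⁻¹ * k⁻¹ : Fˣ) : F) * y) = 1 := by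
        have hk1 : ((k⁻¹ : Fˣ) : F) * (k : F) = 1 := by simp
        rw [h1, h2]
        have hh1 : ((h⁻¹ : Fˣ) : F) * (h : F) = 1 := by simp
        rw [hkk] at hk1
        rw [Units.val_mul]
        linear_combination ((k⁻¹ : Fˣ) : F) * (p.1.1 * x + p.1.2 * y) * hh1 + hk1
      obtain ⟨s, e1, e2⟩ : ∃ s : F, x0 - b * s = ((h⁻¹ * k⁻¹ : Fˣ) : F) * x ∧
          y0 + a * s = ((h⁻¹ * k⁻¹ : Fˣ) : F) * y := by
        generalize ((h⁻¹ * k⁻¹ : Fˣ) : F) * x = X at key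
        generalize ((h⁻¹ * k⁻¹ : Fˣ) : F) * y = Y at key
        rcases hab' with ha | hb
        · refine ⟨(Y - y0) / a, ?_, ?_⟩
          · field_simp
            linear_combination h0 - key
          · field_simp
            ring
        · refine ⟨(x0 - X) / b, ?_, ?_⟩
          · field_simp
            ring
          · field_simp
            linear_combination h0 - key
      exact ⟨s, Quot.sound ⟨h⁻¹ * k⁻¹, H.mul_mem (H.inv_mem hh) (H.inv_mem hk), e1, e2⟩⟩
    · rintro ⟨s, rfl⟩
      exact ⟨_, _, rfl, rfl, 1, H.one_mem, by simpa using (hs s).symm⟩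
  rw [himg, Set.ncard_image_of_injective _ hf, Set.ncard_univ, Nat.card_eq_fintype_card]

/-- Every vertex of `G(q,t)` has at least `q−1` neighbors; more precisely, the number of
vertices adjacent to any given vertex is either `q` or `q−1`. -/
theorem GVertex_degree {q t : ℕ} (hq : IsPrimePow q) (ht : t ∣ q - 1)
    {F : Type} [Field F] [Fintype F] (hF : Fintype.card F = q)
    (H : Subgroup Fˣ) (hH : Nat.card H = t) (v : GVertex F H) :
    q - 1 ≤ {w : GVertex F H | GAdj H v w}.ncard ∧
      ({w : GVertex F H | GAdj H v w}.ncard = q ∨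
        {w : GVertex F H | GAdj H v w}.ncard = q - 1) := by
  have h := GVertex_card H v
  rw [hF] at h
  rw [h]
  exact ⟨Nat.sub_le _ _, Or.inl rfl⟩
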